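/- Let A be an infinite-dimensional unital simple C*-algebra, and let B ⊆ A be a centrally large subalgebra of A such that B has tracial topological rank zero. Then A belongs to the class WTA𝔽, where 𝔽 is the class of finite-dimensional C*-algebras. That is: for every ε > 0, every finite subset F ⊆ A, and every nonzero positive element a ∈ A, there exist a projection p ∈ A, an element g ∈ A with 0 ≤ g ≤ 1, and a finite-dimensional unital C*-subalgebra D ⊆ A with g ∈ D and 1_D = p such that: (1) (p−g)x and x(p−g) lie within ε of D for all x ∈ F; (2) ‖(p−g)x − x(p−g)‖ < ε for all x ∈ F; (3) 1 − (p − g) is Cuntz subequivalent to a in A; (4) ‖(p−g)a(p−g)‖ ≥ ‖a‖ − ε. -/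

import Mathlib

open Filter

/-- `a` is Cuntz subequivalent to `b` in the C*-algebra `A`: there is a sequence
`(rₙ)` in `A` with `‖rₙ * b * rₙ* - a‖ → 0`. -/
def CuntzSubeq {A : Type*} [NonUnitalCStarAlgebra A] (a b : A) : Prop :=
  ∃ r : ℕ → A,
    Tendsto (fun n => ‖r n * b * star (r n) - a‖) atTop (nhds 0)

/-- `a` is Cuntz subequivalent to `b` relative to the subset `S` of `A`: there
is a sequence `(rₙ)` in `S` with `‖rₙ * b * rₙ* - a‖ → 0`. -/
def CuntzSubeqIn {A : Type*} [NonUnitalCStarAlgebra A] (S : Set A) (a b : A) : Prop :=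
  ∃ r : ℕ → A, (∀ n, r n ∈ S) ∧
    Tendsto (fun n => ‖r n * b * star (r n) - a‖) atTop (nhds 0)

/-- A projection in a C*-algebra: a self-adjoint idempotent. -/
def IsProjection {A : Type*} [NonUnitalCStarAlgebra A] (p : A) : Prop :=
  p = star p ∧ p = p * p

/-- A C*-algebra is simple if it has no closed two-sided ideals other than
`⊥` and `⊤`. -/
def IsSimpleCStarAlgebra (A : Type*) [NonUnitalCStarAlgebra A] : Prop :=
  ∀ I : TwoSidedIdeal A, IsClosed (I : Set A) → I = ⊥ ∨ I = ⊤

/-- The unital subalgebra `B` is centrally large in `A` (Archey–Phillips). -/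
def IsCentrallyLarge {A : Type*} [CStarAlgebra A] [PartialOrder A]
    [StarOrderedRing A] (B : StarSubalgebra ℂ A) : Prop :=
  ∀ (m : ℕ) (a : Fin m → A) (ε : ℝ), 0 < ε →
    ∀ x : A, 0 ≤ x → ‖x‖ = 1 → ∀ y ∈ B, 0 ≤ y → y ≠ 0 →
    ∃ c : Fin m → A, ∃ g ∈ B,
      0 ≤ g ∧ g ≤ 1 ∧
      (∀ j, ‖c j - a j‖ < ε) ∧
      (∀ j, (1 - g) * c j ∈ B) ∧
      CuntzSubeqIn (B : Set A) g y ∧ CuntzSubeq g x ∧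
      ‖(1 - g) * x * (1 - g)‖ > 1 - ε ∧
      (∀ j, ‖g * a j - a j * g‖ < ε)

/-- The closed unital subalgebra `B` of `A` has tracial topological rank zero
(Lin), all data being taken inside `B`. -/
def TracialTopRankZeroIn {A : Type*} [CStarAlgebra A] [PartialOrder A]
    [StarOrderedRing A] (B : StarSubalgebra ℂ A) : Prop :=
  ∀ (ε : ℝ), 0 < ε → ∀ G : Finset A, (↑G : Set A) ⊆ (B : Set A) →
    ∀ a ∈ B, 0 ≤ a → a ≠ 0 →
    ∃ p ∈ B, IsProjection p ∧ p ≠ 0 ∧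
    ∃ E : NonUnitalStarSubalgebra ℂ A, (E : Set A) ⊆ (B : Set A) ∧
      FiniteDimensional ℂ E ∧ p ∈ E ∧
      (∀ z ∈ E, p * z = z ∧ z * p = z) ∧
      (∀ x ∈ G, ‖p * x - x * p‖ < ε) ∧
      (∀ x ∈ G, ∃ d ∈ E, ‖p * x * p - d‖ < ε) ∧
      CuntzSubeqIn (B : Set A) (1 - p) a

local infix:50 " ≾ " => CuntzSubeq

/-!
Central largeness gives `k ∈ B` with `0 ≤ k ≤ 1`, Cuntz-small and almost commuting with `F`, such
that `1 - k` multiplies `F` almost into `B` and `(1 - k) * a * (1 - k)` is close to an element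
`w ∈ B` of almost the norm of `a`. Tracial rank zero, applied to `k` and the approximants in `B`,
gives a projection `p` with Cuntz-small complement, almost commuting with them, whose compressions
lie almost in a finite-dimensional algebra `E` with unit `p`. Perturbing `p * k * p` to some `g ∈ E`
with `g ≾ k` makes `p - g` close to `p * (1 - k)`, from which all estimates follow.

Two orthogonal nonzero positive elements below `a`, which exist because `A` is infinite-dimensional,
leave room for both `g` and `1 - p`. To keep `‖p * w * p‖` large, one uses
`v = (w - (‖w‖ - ε / 2))⁺`, for which `v * w * v ≥ (‖w‖ - ε / 2) • (v * v)`, and the fact that `v`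
is full in `B`, so that `‖p * v‖` is bounded below.
-/

section CuntzComparison

section NonUnital

variable {A : Type*} [NonUnitalCStarAlgebra A] {S : Set A} {a b c : A}

theorem cuntzSubeqIn_iff_mem_closure :
    CuntzSubeqIn S a b ↔ a ∈ closure ((fun r => r * b * star r) '' S) := by
  simp only [CuntzSubeqIn, ← tendsto_iff_norm_sub_tendsto_zero, mem_closure_iff_seq_limit]
  constructor
  · rintro ⟨r, hrS, hr⟩
    exact ⟨_, fun n => ⟨r n, hrS n, rfl⟩, hr⟩
  · rintro ⟨x, hx, hxa⟩
    choose r hrS hr using hx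
    exact ⟨r, hrS, by simpa only [hr] using hxa⟩

theorem CuntzSubeqIn.exists_norm_sub_lt (h : CuntzSubeqIn S a b) {ε : ℝ} (hε : 0 < ε) :
    ∃ r ∈ S, ‖r * b * star r - a‖ < ε := by
  obtain ⟨_, ⟨r, hr, rfl⟩, hlt⟩ :=
    Metric.mem_closure_iff.mp (cuntzSubeqIn_iff_mem_closure.mp h) ε hε
  exact ⟨r, hr, by rwa [← dist_eq_norm, dist_comm]⟩

theorem CuntzSubeqIn.cuntzSubeq (h : CuntzSubeqIn S a b) : a ≾ b :=
  h.imp fun _ => And.right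

theorem cuntzSubeq_iff_mem_closure :
    a ≾ b ↔ a ∈ closure (Set.range fun r => r * b * star r) := by
  rw [← Set.image_univ, ← cuntzSubeqIn_iff_mem_closure]
  simp only [CuntzSubeq, CuntzSubeqIn, Set.mem_univ, implies_true, true_and]

theorem conj_cuntzSubeq (r b : A) : r * b * star r ≾ b :=
  cuntzSubeq_iff_mem_closure.mpr (subset_closure ⟨r, rfl⟩)

theorem CuntzSubeq.conj (h : a ≾ b) (r : A) : r * a * star r ≾ b := by
  rw [cuntzSubeq_iff_mem_closure] at h ⊢
  refine map_mem_closure (f := fun x => r * x * star r) (by fun_prop) h ?_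
  rintro _ ⟨t, rfl⟩
  exact ⟨r * t, by simp only [star_mul, mul_assoc]⟩

theorem CuntzSubeq.trans (hab : a ≾ b) (hbc : b ≾ c) : a ≾ c := by
  rw [cuntzSubeq_iff_mem_closure] at hab ⊢
  refine closure_minimal ?_ isClosed_closure hab
  rintro _ ⟨r, rfl⟩
  exact cuntzSubeq_iff_mem_closure.mp (hbc.conj r)

end NonUnital

section Unital

variable {A : Type*} [CStarAlgebra A]

theorem smul_cuntzSubeq {t : ℝ} (ht : 0 ≤ t) (b : A) : t • b ≾ b := by
  simpa [smul_smul, Real.mul_self_sqrt ht] using conj_cuntzSubeq (Real.sqrt t • (1 : A)) b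

variable [PartialOrder A] [StarOrderedRing A] {a₁ a₂ b₁ b₂ h s x y : A}

theorem exists_isSelfAdjoint_norm_conj_one_sub_mul_le (hy : 0 ≤ y) {η : ℝ} (hη : 0 < η) :
    ∃ z : A, IsSelfAdjoint z ∧ ‖(1 - y * z) * y * (1 - z * y)‖ ≤ η := by
  let f : ℝ → ℝ := fun t => (|t| + η)⁻¹
  have hf : Continuous f := Continuous.inv₀ (by fun_prop) fun t => by positivity
  refine ⟨cfc f y, cfc_predicate f y, ?_⟩
  have hcfc : (1 - y * cfc f y) * y * (1 - cfc f y * y)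
      = cfc (fun t => (1 - t * f t) * t * (1 - f t * t)) y := by
    rw [cfc_mul _ _ y, cfc_mul _ _ y, cfc_sub _ _ y, cfc_sub _ _ y, cfc_mul _ _ y, cfc_mul _ _ y,
      cfc_const_one ℝ y, cfc_id' ℝ y]
  rw [hcfc]
  refine norm_cfc_le hη.le fun t ht => ?_
  have ht0 : 0 ≤ t := spectrum_nonneg_of_nonneg hy ht
  have hval : (1 - t * f t) * t * (1 - f t * t) = η * (t / (t + η) * (η / (t + η))) := by
    simp only [f, abs_of_nonneg ht0]
    field_simp
    ring
  rw [hval, Real.norm_of_nonneg (by positivity)]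
  refine mul_le_of_le_one_right hη.le (mul_le_one₀ ?_ (by positivity) ?_) <;>
    exact (div_le_one (by positivity)).mpr (by linarith)

theorem exists_isSelfAdjoint_mul_self_eq (hy : 0 ≤ y) : ∃ s : A, IsSelfAdjoint s ∧ s * s = y :=
  ⟨CFC.sqrt y, .of_nonneg (CFC.sqrt_nonneg y), CFC.sqrt_mul_sqrt_self y hy⟩

theorem cuntzSubeq_mul_self_of_le (hx : 0 ≤ x) (hxy : x ≤ y) : x ≾ y * y := by
  have hy : 0 ≤ y := hx.trans hxy
  obtain ⟨s, hs, hss⟩ := exists_isSelfAdjoint_mul_self_eq hx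
  have hs_mem : s ∈ closure (Set.range fun z => s * z * y) := by
    refine Metric.mem_closure_iff.mpr fun ε hε => ?_
    obtain ⟨z, hz, hzy⟩ :=
      exists_isSelfAdjoint_norm_conj_one_sub_mul_le hy (η := (ε / 2) ^ 2) (by positivity)
    refine ⟨_, ⟨z, rfl⟩, ?_⟩
    have hstar : star (1 - z * y) = 1 - y * z := by
      rw [star_sub, star_one, star_mul, hz.star_eq, (IsSelfAdjoint.of_nonneg hy).star_eq]
    have hsq : ‖s * (1 - z * y)‖ ^ 2 ≤ (ε / 2) ^ 2 := calc
      ‖s * (1 - z * y)‖ ^ 2 = ‖(1 - y * z) * x * (1 - z * y)‖ := by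
        rw [sq, ← CStarRing.norm_star_mul_self, star_mul, hstar, hs.star_eq, ← hss]
        simp only [mul_assoc]
      _ ≤ ‖(1 - y * z) * y * (1 - z * y)‖ := by
        rw [← hstar]
        exact CStarAlgebra.norm_le_norm_of_nonneg_of_le (star_left_conjugate_nonneg hx _)
          (star_left_conjugate_le_conjugate hxy _)
      _ ≤ (ε / 2) ^ 2 := hzy
    calc dist s (s * z * y) = ‖s * (1 - z * y)‖ := by rw [dist_eq_norm, mul_sub, mul_one, mul_assoc]
      _ ≤ ε / 2 := by rwa [sq_le_sq₀ (norm_nonneg _) (by positivity)] at hsq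
      _ < ε := half_lt_self hε
  have hx_mem := map_mem_closure (f := fun t => t * star t) (by fun_prop) hs_mem
    (t := Set.range fun r => r * (y * y) * star r) <| by
      rintro _ ⟨z, rfl⟩
      exact ⟨s * z, by
        simp only [star_mul, mul_assoc, (IsSelfAdjoint.of_nonneg hy).star_eq]⟩
  rwa [hs.star_eq, hss, ← cuntzSubeq_iff_mem_closure] at hx_mem

theorem mul_self_cuntzSubeq (hy : 0 ≤ y) : y * y ≾ y := by
  obtain ⟨s, hs, rfl⟩ := exists_isSelfAdjoint_mul_self_eq hy
  simpa only [hs.star_eq, mul_assoc] using conj_cuntzSubeq s (s * s)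

theorem cuntzSubeq_of_le (hx : 0 ≤ x) (hxy : x ≤ y) : x ≾ y :=
  (cuntzSubeq_mul_self_of_le hx hxy).trans (mul_self_cuntzSubeq (hx.trans hxy))

theorem cuntzSubeq_conj_self (hy : 0 ≤ y) : y ≾ y * y * y := by
  have hyy : 0 ≤ y * y := (IsSelfAdjoint.of_nonneg hy).mul_self_nonneg
  have hfour : y * y * (y * y) ≾ y * y * y := by
    obtain ⟨s, hs, rfl⟩ := exists_isSelfAdjoint_mul_self_eq hy
    simpa only [hs.star_eq, mul_assoc] using conj_cuntzSubeq s (s * s * (s * s) * (s * s))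
  exact (cuntzSubeq_mul_self_of_le hy le_rfl).trans
    ((cuntzSubeq_mul_self_of_le hyy le_rfl).trans hfour)

theorem posPart_cuntzSubeq_of_le (hh : IsSelfAdjoint h) (hhy : h ≤ y) : h⁺ ≾ y := by
  have hpos : 0 ≤ h⁺ := CFC.posPart_nonneg h
  have hstar : star h⁺ = h⁺ := (IsSelfAdjoint.of_nonneg hpos).star_eq
  have hcube : h⁺ * h⁺ * h⁺ ≤ h⁺ * y * h⁺ := calc
    h⁺ * h⁺ * h⁺ = h⁺ * h * h⁺ := by
      nth_rw 5 [← CFC.posPart_sub_negPart h hh]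
      rw [mul_sub, CFC.posPart_mul_negPart, sub_zero]
    _ ≤ h⁺ * y * h⁺ := by simpa only [hstar] using star_left_conjugate_le_conjugate hhy h⁺
  have hcube_nonneg : 0 ≤ h⁺ * h⁺ * h⁺ := by
    simpa only [hstar] using star_left_conjugate_nonneg hpos h⁺
  refine (cuntzSubeq_conj_self hpos).trans ((cuntzSubeq_of_le hcube_nonneg hcube).trans ?_)
  simpa only [hstar] using conj_cuntzSubeq h⁺ y

theorem CuntzSubeq.add_of_mul_eq_zero (h₁ : a₁ ≾ b₁) (h₂ : a₂ ≾ b₂) (hb₁ : 0 ≤ b₁)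
    (hb₂ : 0 ≤ b₂) (hb : b₁ * b₂ = 0) : a₁ + a₂ ≾ b₁ + b₂ := by
  have hs₁ := (IsSelfAdjoint.of_nonneg hb₁).star_eq
  have hs₂ := (IsSelfAdjoint.of_nonneg hb₂).star_eq
  have hb' : b₂ * b₁ = 0 := by simpa [hs₁, hs₂] using congrArg star hb
  have h₁' := cuntzSubeq_iff_mem_closure.mp (h₁.trans (cuntzSubeq_conj_self hb₁))
  have h₂' := cuntzSubeq_iff_mem_closure.mp (h₂.trans (cuntzSubeq_conj_self hb₂))
  refine cuntzSubeq_iff_mem_closure.mpr (map_mem_closure₂ continuous_add h₁' h₂' ?_)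
  rintro _ ⟨r₁, rfl⟩ _ ⟨r₂, rfl⟩
  refine ⟨r₁ * b₁ + r₂ * b₂, ?_⟩
  have hcorner : (r₁ * b₁ + r₂ * b₂) * (b₁ + b₂) = r₁ * b₁ * b₁ + r₂ * b₂ * b₂ := by
    simp only [add_mul, mul_add, mul_assoc, hb, hb', mul_zero, zero_add, add_zero]
  simp only [hcorner, star_add, star_mul, hs₁, hs₂]
  simp only [add_mul, mul_add, ← mul_assoc]
  simp only [mul_assoc _ b₁ b₂, mul_assoc _ b₂ b₁, hb, hb', mul_zero, zero_mul, add_zero,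
    zero_add]

theorem abs_conj_cuntzSubeq (hs : IsSelfAdjoint s) (hy : IsSelfAdjoint y) :
    CFC.abs (s * y * s) ≾ s * s := by
  have hh : IsSelfAdjoint (s * y * s) := by
    simpa only [hs.star_eq] using hy.conjugate s
  have hsq : s * (y * (s * s) * y) * s = CFC.abs (s * y * s) * CFC.abs (s * y * s) := by
    rw [CFC.abs_mul_abs, hh.star_eq]
    simp only [mul_assoc]
  have hss : IsSelfAdjoint (y * (s * s) * y) := by
    simpa only [hy.star_eq] using hs.mul_self_nonneg.isSelfAdjoint.conjugate y
  have hle : s * (y * (s * s) * y) * s ≤ ‖y * (s * s) * y‖ • (s * s) := by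
    simpa only [hs.star_eq] using
      CStarAlgebra.star_right_conjugate_le_norm_smul (a := s) (b := y * (s * s) * y) hss
  refine (cuntzSubeq_mul_self_of_le (CFC.abs_nonneg _) le_rfl).trans ?_
  rw [← hsq]
  refine (cuntzSubeq_of_le ?_ hle).trans (smul_cuntzSubeq (norm_nonneg _) _)
  rw [hsq]
  exact (CFC.abs_nonneg _).isSelfAdjoint.mul_self_nonneg

end Unital

end CuntzComparison

section SimpleRing

variable {R : Type*} [Ring R] [IsSimpleRing R]

theorem exists_sum_mul_mul_eq_one {b : R} (hb : b ≠ 0) :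
    ∃ (n : ℕ) (x y : Fin n → R), ∑ i, x i * b * y i = 1 := by
  have hone : (1 : R) ∈ TwoSidedIdeal.span {b} :=
    IsSimpleRing.one_mem_of_ne_zero_mem _ hb (TwoSidedIdeal.subset_span rfl)
  rw [TwoSidedIdeal.mem_span_iff_mem_addSubgroup_closure] at hone
  generalize (1 : R) = z at hone ⊢
  induction hone using AddSubgroup.closure_induction with
  | mem _ h =>
    obtain ⟨_, ⟨x, -, _, rfl, rfl⟩, y, -, rfl⟩ := h
    exact ⟨1, fun _ => x, fun _ => y, by simp⟩
  | zero => exact ⟨0, 0, 0, by simp⟩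
  | add _ _ _ _ h₁ h₂ =>
    obtain ⟨m, x₁, y₁, rfl⟩ := h₁
    obtain ⟨n, x₂, y₂, rfl⟩ := h₂
    exact ⟨m + n, Fin.append x₁ x₂, Fin.append y₁ y₂, by simp [Fin.sum_univ_add]⟩
  | neg _ _ h =>
    obtain ⟨n, x, y, rfl⟩ := h
    exact ⟨n, -x, y, by simp⟩

theorem finiteDimensional_of_mul_mul_eq_smul {k : Type*} [Field k] [Algebra k R] {q t : R}
    (hq : q ≠ 0) (h : ∀ x : R, ∃ c : k, q * x * q = c • t) : FiniteDimensional k R := by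
  obtain ⟨n, x, y, hxy⟩ := exists_sum_mul_mul_eq_one hq
  have hspan : Submodule.span k (Set.range fun ij : Fin n × Fin n => x ij.1 * t * y ij.2) = ⊤ := by
    refine eq_top_iff.mpr fun a _ => ?_
    have ha : a = ∑ i, ∑ j, x i * (q * (y i * a * x j) * q) * y j := calc
      a = (∑ i, x i * q * y i) * a * ∑ j, x j * q * y j := by rw [hxy, one_mul, mul_one]
      _ = _ := by
        simp only [Finset.sum_mul, Finset.mul_sum, mul_assoc]
        exact Finset.sum_comm
    rw [ha]
    refine sum_mem fun i _ => sum_mem fun j _ => ?_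
    obtain ⟨c, hc⟩ := h (y i * a * x j)
    rw [hc, mul_smul_comm, smul_mul_assoc]
    exact Submodule.smul_mem _ c (Submodule.subset_span ⟨(i, j), rfl⟩)
  exact Module.finite_def.mpr (hspan ▸ Submodule.fg_span (Set.finite_range _))

end SimpleRing

theorem exists_eq_smul_of_forall_le_or_le {E : Type*} [TopologicalSpace E] [PartialOrder E]
    [OrderClosedTopology E] [AddCommGroup E] [Module ℝ E] [ContinuousSMul ℝ E] {x a : E}
    {l u : ℝ} (hl : l • a ≤ x) (hu : x ≤ u • a) (h : ∀ r : ℝ, x ≤ r • a ∨ r • a ≤ x) :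
    ∃ r : ℝ, x = r • a := by
  have hsmul : Continuous fun r : ℝ => r • a := by fun_prop
  obtain ⟨r, -, hle, hge⟩ := isPreconnected_closed_iff.mp isPreconnected_univ
    {r : ℝ | x ≤ r • a} {r : ℝ | r • a ≤ x} (isClosed_le continuous_const hsmul)
    (isClosed_le hsmul continuous_const) (fun r _ => h r) ⟨u, trivial, hu⟩ ⟨l, trivial, hl⟩
  exact ⟨r, le_antisymm hle hge⟩

section SimpleCStarAlgebra

variable {A : Type*} [CStarAlgebra A]

theorem IsSimpleCStarAlgebra.isSimpleRing [Nontrivial A] (h : IsSimpleCStarAlgebra A) :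
    IsSimpleRing A := by
  refine .of_eq_bot_or_eq_top fun I => ?_
  let J : TwoSidedIdeal A := .mk' (closure (I : Set A)) (subset_closure I.zero_mem)
    (fun hx hy => map_mem_closure₂ continuous_add hx hy fun _ ha _ hb => I.add_mem ha hb)
    (fun hx => map_mem_closure continuous_neg hx fun _ => I.neg_mem)
    (fun {x _} hy => map_mem_closure (continuous_const_mul x) hy fun _ => I.mul_mem_left x _)
    (fun {_ y} hx =>
      map_mem_closure (f := (· * y)) (by fun_prop) hx fun _ => I.mul_mem_right _ y)
  have hJ : (J : Set A) = closure I := TwoSidedIdeal.coe_mk' ..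
  refine (h J (hJ ▸ isClosed_closure)).imp (fun hbot => ?_) fun htop => ?_
  · refine eq_bot_iff.mpr fun x hx => hbot ▸ ?_
    exact hJ.ge (subset_closure hx)
  · have hone : (1 : A) ∈ closure (I : Set A) := hJ ▸ htop ▸ TwoSidedIdeal.mem_top A
    obtain ⟨_, ⟨u, rfl⟩, huI⟩ := mem_closure_iff.mp hone _ Units.isOpen isUnit_one
    rw [← TwoSidedIdeal.one_mem_iff, ← u.inv_mul]
    exact I.mul_mem_left _ _ huI

variable [PartialOrder A] [StarOrderedRing A] {a b s y : A}

theorem mul_mul_add_star_le (hb : 0 ≤ b) (x y : A) :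
    x * b * y + star (x * b * y) ≤ x * b * star x + star y * b * y := by
  have hnonneg := star_right_conjugate_nonneg hb (x - star y)
  have hexpand : (x - star y) * b * star (x - star y)
      = x * b * star x + star y * b * y - (x * b * y + star (x * b * y)) := by
    simp only [star_sub, star_mul, star_star, hb.isSelfAdjoint.star_eq]
    noncomm_ring
  rwa [hexpand, sub_nonneg] at hnonneg

theorem exists_one_le_sum_conj [IsSimpleRing A] (hb : 0 ≤ b) (hb0 : b ≠ 0) :
    ∃ (n : ℕ) (x : Fin n → A), 1 ≤ ∑ i, x i * b * star (x i) := by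
  obtain ⟨n, x, y, hxy⟩ := exists_sum_mul_mul_eq_one hb0
  refine ⟨n + n, Fin.append x (star y), ?_⟩
  calc (1 : A) ≤ 1 + 1 := le_add_of_nonneg_left zero_le_one
    _ = ∑ i, (x i * b * y i + star (x i * b * y i)) := by
      rw [Finset.sum_add_distrib, ← star_sum, hxy, star_one]
    _ ≤ ∑ i, (x i * b * star (x i) + star (y i) * b * y i) :=
      Finset.sum_le_sum fun i _ => mul_mul_add_star_le hb (x i) (y i)
    _ = ∑ i, Fin.append x (star y) i * b * star (Fin.append x (star y) i) := by
      simp only [Fin.sum_univ_add, Fin.append_left, Fin.append_right, Pi.star_apply, star_star,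
        Finset.sum_add_distrib]

theorem exists_mul_mul_eq_smul_of_posPart_or_negPart_eq_zero (hs : IsSelfAdjoint s)
    (h : ∀ y : A, IsSelfAdjoint y → (s * y * s)⁺ = 0 ∨ (s * y * s)⁻ = 0)
    (x : A) : ∃ c : ℂ, s * x * s = c • (s * s) := by
  have hconj {y : A} (hy : IsSelfAdjoint y) : IsSelfAdjoint (s * y * s) := by
    simpa only [hs.star_eq] using hy.conjugate s
  have hreal (y : A) (hy : IsSelfAdjoint y) : ∃ r : ℝ, s * y * s = r • (s * s) := by
    have hmono {y z : A} (hyz : y ≤ z) : s * y * s ≤ s * z * s := by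
      simpa only [hs.star_eq] using star_left_conjugate_le_conjugate hyz s
    have hscalar (r : ℝ) : s * algebraMap ℝ A r * s = r • (s * s) := by
      rw [← Algebra.commutes, mul_assoc, ← Algebra.smul_def]
    refine exists_eq_smul_of_forall_le_or_le (l := -‖y‖) (u := ‖y‖) ?_ ?_ fun r => ?_
    · rw [← hscalar, map_neg]
      exact hmono hy.neg_algebraMap_norm_le_self
    · rw [← hscalar]
      exact hmono hy.le_algebraMap_norm_self
    · have hyr : IsSelfAdjoint (y - algebraMap ℝ A r) := hy.sub (.algebraMap A (.all r))
      have hsub : s * (y - algebraMap ℝ A r) * s = s * y * s - r • (s * s) := by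
        rw [mul_sub, sub_mul, hscalar]
      refine (h _ hyr).imp (fun hpos => ?_) fun hneg => ?_
      · rw [CFC.posPart_eq_zero_iff _ (hconj hyr), hsub] at hpos
        exact sub_nonpos.mp hpos
      · rw [CFC.negPart_eq_zero_iff _ (hconj hyr), hsub] at hneg
        exact sub_nonneg.mp hneg
  obtain ⟨c, hc⟩ := hreal (realPart x) (realPart x).2
  obtain ⟨d, hd⟩ := hreal (imaginaryPart x) (imaginaryPart x).2
  refine ⟨c + Complex.I * d, ?_⟩
  conv_lhs => rw [← realPart_add_I_smul_imaginaryPart x]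
  rw [mul_add, add_mul, mul_smul_comm, smul_mul_assoc, hc, hd, add_smul, mul_smul,
    Complex.coe_smul, Complex.coe_smul]

theorem exists_orthogonal_cuntzSubeq [IsSimpleRing A] (hinf : ¬ FiniteDimensional ℂ A)
    (ha : 0 ≤ a) (ha0 : a ≠ 0) :
    ∃ a₁ a₂ : A, 0 ≤ a₁ ∧ a₁ ≠ 0 ∧ 0 ≤ a₂ ∧ a₂ ≠ 0 ∧ a₁ * a₂ = 0 ∧ a₁ + a₂ ≾ a := by
  by_contra! hnone
  obtain ⟨s, hs, rfl⟩ := exists_isSelfAdjoint_mul_self_eq ha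
  have hs0 : s ≠ 0 := left_ne_zero_of_mul ha0
  refine hinf (finiteDimensional_of_mul_mul_eq_smul hs0
    (exists_mul_mul_eq_smul_of_posPart_or_negPart_eq_zero hs fun y hy => ?_))
  by_contra! hpn
  have hh : IsSelfAdjoint (s * y * s) := by
    simpa only [hs.star_eq] using hy.conjugate s
  refine hnone _ _ (CFC.posPart_nonneg _) hpn.1 (CFC.negPart_nonneg _) hpn.2
    (CFC.posPart_mul_negPart _) ?_
  rw [CFC.posPart_add_negPart _ hh]
  exact abs_conj_cuntzSubeq hs hy

end SimpleCStarAlgebra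

theorem exists_pos_le_apply_lt_of_continuous {f : ℝ → ℝ} (hf : Continuous f) (hf0 : f 0 = 0)
    {ε η : ℝ} (hε : 0 < ε) (hη : 0 < η) : ∃ δ > 0, δ ≤ ε ∧ f δ < η := by
  have hlim : Tendsto f (nhdsWithin 0 (Set.Ioi 0)) (nhds 0) :=
    tendsto_nhdsWithin_of_tendsto_nhds (hf.tendsto' 0 0 hf0)
  obtain ⟨δ, hlt, hδ⟩ := ((hlim.eventually_lt_const hη).and (Ioc_mem_nhdsGT hε)).exists
  exact ⟨δ, hδ.1, hδ.2, hlt⟩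

theorem exists_pos_forall_mul_lt {ι : Type*} (s : Finset ι) (f : ι → ℝ) {ε : ℝ} (hε : 0 < ε) :
    ∃ δ > 0, ∀ i ∈ s, f i * δ < ε := by
  obtain ⟨δ, hδ, -, hδε⟩ : ∃ δ > 0, δ ≤ 1 ∧ (∑ i ∈ s, |f i|) * δ < ε :=
    exists_pos_le_apply_lt_of_continuous (by fun_prop) (by simp) one_pos hε
  refine ⟨δ, hδ, fun i hi => hδε.trans_le' ?_⟩
  gcongr
  exact (le_abs_self _).trans (Finset.single_le_sum (f := fun i => |f i|) (by simp) hi)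

theorem posPart_mem_of_isClosed {A S : Type*} [NonUnitalCStarAlgebra A] [SetLike S A]
    [NonUnitalSubringClass S A] [SMulMemClass S ℂ A] [StarMemClass S A] {s : S}
    (hs : IsClosed (s : Set A)) {x : A} (hx : x ∈ s) : x⁺ ∈ s := by
  rw [CFC.posPart_def]
  exact cfcₙ_mem (𝕜' := ℂ) (hs := hs) _ hx

section CentrallyLarge

variable {A : Type*} [CStarAlgebra A] [PartialOrder A] [StarOrderedRing A]
  {B : StarSubalgebra ℂ A} {a b g x y : A}

theorem sub_algebraMap_le_of_norm_sub_le (hxy : IsSelfAdjoint (x - y)) {r : ℝ}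
    (h : ‖x - y‖ ≤ r) : y - algebraMap ℝ A r ≤ x := by
  have hneg : -algebraMap ℝ A r ≤ x - y :=
    (neg_le_neg (algebraMap_mono A h)).trans hxy.neg_algebraMap_norm_le_self
  rw [sub_eq_add_neg, add_comm]
  exact le_sub_iff_add_le.mp hneg

theorem norm_one_sub_le_one (hg0 : 0 ≤ g) (hg1 : g ≤ 1) : ‖1 - g‖ ≤ 1 :=
  (CStarAlgebra.norm_le_one_iff_of_nonneg _ (sub_nonneg.mpr hg1)).mpr (sub_le_self 1 hg0)

theorem one_le_four_smul_add_conj (hg : IsSelfAdjoint g) (hx : g - algebraMap ℝ A (1 / 4) ≤ x)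
    (hy : 1 - algebraMap ℝ A (1 / 4) ≤ y) : 1 ≤ (4 : ℝ) • (x + (1 - g) * y * (1 - g)) := by
  have hk : IsSelfAdjoint (1 - g) := .sub (.one A) hg
  have hconj : (1 - g) * (1 - algebraMap ℝ A (1 / 4)) * (1 - g) ≤ (1 - g) * y * (1 - g) := by
    simpa only [hk.star_eq] using star_left_conjugate_le_conjugate hy (1 - g)
  refine le_trans ?_ (smul_le_smul_of_nonneg_left (add_le_add hx hconj) (by norm_num))
  have hsq : (4 : ℝ) • (g - algebraMap ℝ A (1 / 4)
      + (1 - g) * (1 - algebraMap ℝ A (1 / 4)) * (1 - g)) - 1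
      = (1 - g) * (1 - g) + (2 : ℝ) • (g * g) := by
    simp only [Algebra.algebraMap_eq_smul_one, mul_sub, sub_mul, mul_one, one_mul,
      smul_mul_assoc, mul_smul_comm]
    module
  rw [← sub_nonneg, hsq]
  exact add_nonneg hk.mul_self_nonneg (smul_nonneg zero_le_two hg.mul_self_nonneg)

-- Only the `(1 - g) * c i` lie in `B`, so they dominate `1` up to `g`; the missing part is supplied
-- by `g ≾ b` relative to `B`.
theorem IsCentrallyLarge.exists_one_le_sum_conj [IsSimpleRing A] (hB : IsCentrallyLarge B)
    (hbB : b ∈ B) (hb : 0 ≤ b) (hb0 : b ≠ 0) :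
    ∃ (n : ℕ) (r : Fin n → A), (∀ i, r i ∈ B) ∧ 1 ≤ ∑ i, r i * b * star (r i) := by
  obtain ⟨n, x, hx⟩ := _root_.exists_one_le_sum_conj hb hb0
  let Φ : (Fin n → A) → A := fun z => ∑ i, z i * b * star (z i)
  have hΦ : Continuous Φ := by fun_prop
  obtain ⟨δ, hδ, hΦδ⟩ := Metric.continuous_iff.mp hΦ x (1 / 4) (by norm_num)
  obtain ⟨c, g, -, hg0, -, hcx, hcB, hgb, -⟩ :=
    hB n x δ hδ 1 zero_le_one norm_one b hbB hb hb0
  obtain ⟨r₀, hr₀B, hr₀⟩ := hgb.exists_norm_sub_lt (ε := 1 / 4) (by norm_num)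
  have hgsa : IsSelfAdjoint g := .of_nonneg hg0
  have hconj_sa (r : A) : IsSelfAdjoint (r * b * star r) := hb.isSelfAdjoint.conjugate r
  have hr₀_ge : g - algebraMap ℝ A (1 / 4) ≤ r₀ * b * star r₀ :=
    sub_algebraMap_le_of_norm_sub_le ((hconj_sa r₀).sub hgsa) hr₀.le
  have hΦc : 1 - algebraMap ℝ A (1 / 4) ≤ Φ c := by
    have hΦ_sa (z : Fin n → A) : IsSelfAdjoint (Φ z) := by
      simp only [Φ, IsSelfAdjoint, star_sum, (hconj_sa _).star_eq]
    have hdist := hΦδ c ((dist_pi_lt_iff hδ).mpr fun i => by simpa [dist_eq_norm] using hcx i)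
    rw [dist_eq_norm] at hdist
    exact (sub_le_sub_right hx _).trans
      (sub_algebraMap_le_of_norm_sub_le ((hΦ_sa c).sub (hΦ_sa x)) hdist.le)
  let r : Fin (n + 1) → A := Fin.cons r₀ fun i => (1 - g) * c i
  have hrB (i) : r i ∈ B := Fin.cases hr₀B hcB i
  refine ⟨n + 1, fun i => (2 : ℂ) • r i, fun i => B.smul_mem (hrB i) 2, ?_⟩
  convert one_le_four_smul_add_conj hgsa hr₀_ge hΦc using 1
  have hsum : ∑ i, r i * b * star (r i) = r₀ * b * star r₀ + (1 - g) * Φ c * (1 - g) := by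
    simp only [r, Fin.sum_univ_succ, Fin.cons_zero, Fin.cons_succ, star_mul, star_sub, star_one,
      hgsa.star_eq, Φ, Finset.mul_sum, Finset.sum_mul, mul_assoc]
  rw [← hsum, Finset.smul_sum]
  refine Finset.sum_congr rfl fun i _ => ?_
  rw [star_smul, smul_mul_assoc, smul_mul_smul_comm, ← Complex.coe_smul]
  norm_num

theorem IsCentrallyLarge.exists_finset_approx (hB : IsCentrallyLarge B) (F : Finset A)
    (ha : 0 ≤ a) (ha0 : a ≠ 0) (hyB : y ∈ B) (hy : 0 ≤ y) (hy0 : y ≠ 0) {ε : ℝ} (hε : 0 < ε) :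
    ∃ g ∈ B, 0 ≤ g ∧ g ≤ 1 ∧ g ≾ y ∧ (∀ x ∈ F, ‖g * x - x * g‖ < ε) ∧
      (∀ x ∈ F, ∃ b ∈ B, ‖(1 - g) * x - b‖ < ε) ∧ ‖a‖ - ε < ‖(1 - g) * a * (1 - g)‖ := by
  have hapos : 0 < ‖a‖ := norm_pos_iff.mpr ha0
  obtain ⟨c, g, hgB, hg0, hg1, hc, hcB, hgy, -, hnorm, hcomm⟩ :=
    hB F.card (fun j => F.equivFin.symm j) (min ε (ε / ‖a‖)) (by positivity)
      (‖a‖⁻¹ • a) (smul_nonneg (by positivity) ha) (norm_smul_inv_norm (𝕜 := ℝ) ha0)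
      y hyB hy hy0
  have hmem (x : A) (hx : x ∈ F) : ∃ j, (F.equivFin.symm j : A) = x :=
    ⟨F.equivFin ⟨x, hx⟩, by simp⟩
  refine ⟨g, hgB, hg0, hg1, hgy.cuntzSubeq, fun x hx => ?_, fun x hx => ?_, ?_⟩
  · obtain ⟨j, rfl⟩ := hmem x hx
    exact (hcomm j).trans_le (min_le_left _ _)
  · obtain ⟨j, rfl⟩ := hmem x hx
    refine ⟨_, hcB j, ?_⟩
    calc ‖(1 - g) * F.equivFin.symm j - (1 - g) * c j‖
        ≤ ‖1 - g‖ * ‖c j - F.equivFin.symm j‖ := by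
          rw [← mul_sub, norm_sub_rev (c j)]
          exact norm_mul_le _ _
      _ ≤ ‖c j - F.equivFin.symm j‖ :=
        mul_le_of_le_one_left (norm_nonneg _) (norm_one_sub_le_one hg0 hg1)
      _ < ε := (hc j).trans_le (min_le_left _ _)
  · have hscaled : 1 - ε / ‖a‖ < ‖a‖⁻¹ * ‖(1 - g) * a * (1 - g)‖ := calc
      1 - ε / ‖a‖ ≤ 1 - min ε (ε / ‖a‖) := sub_le_sub_left (min_le_right _ _) 1
      _ < ‖(1 - g) * ‖a‖⁻¹ • a * (1 - g)‖ := hnorm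
      _ = ‖a‖⁻¹ * ‖(1 - g) * a * (1 - g)‖ := by
        rw [mul_smul_comm, smul_mul_assoc, norm_smul, norm_inv, norm_norm]
    calc ‖a‖ - ε = ‖a‖ * (1 - ε / ‖a‖) := by field_simp
      _ < ‖a‖ * (‖a‖⁻¹ * ‖(1 - g) * a * (1 - g)‖) := mul_lt_mul_of_pos_left hscaled hapos
      _ = ‖(1 - g) * a * (1 - g)‖ := mul_inv_cancel_left₀ hapos.ne' _

theorem norm_mul_star_self_sub_le {E : Type*} [NonUnitalNormedRing E] [StarRing E]
    [NormedStarGroup E] (x y : E) :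
    ‖x * star x - y * star y‖ ≤ ‖x - y‖ * (‖x - y‖ + 2 * ‖y‖) := calc
  ‖x * star x - y * star y‖ = ‖(x - y) * star (x - y) + (x - y) * star y + y * star (x - y)‖ := by
    congr 1
    rw [star_sub]
    noncomm_ring
  _ ≤ ‖x - y‖ * ‖x - y‖ + ‖x - y‖ * ‖y‖ + ‖y‖ * ‖x - y‖ := by
    refine norm_add₃_le.trans (add_le_add_three ?_ ?_ ?_) <;>
      exact (norm_mul_le _ _).trans_eq (by simp only [norm_star])
  _ = ‖x - y‖ * (‖x - y‖ + 2 * ‖y‖) := by ring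

theorem IsCentrallyLarge.exists_finset_approx_nonneg (hB : IsCentrallyLarge B) (F : Finset A)
    (ha : 0 ≤ a) (ha0 : a ≠ 0) (hyB : y ∈ B) (hy : 0 ≤ y) (hy0 : y ≠ 0) {ε : ℝ} (hε : 0 < ε) :
    ∃ g ∈ B, 0 ≤ g ∧ g ≤ 1 ∧ g ≾ y ∧ (∀ x ∈ F, ‖g * x - x * g‖ < ε) ∧
      (∀ x ∈ F, ∃ b ∈ B, ‖(1 - g) * x - b‖ < ε) ∧
      ∃ w ∈ B, 0 ≤ w ∧ ‖w - (1 - g) * a * (1 - g)‖ < ε ∧ ‖a‖ - ε < ‖w‖ := by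
  classical
  obtain ⟨s, hs, rfl⟩ := exists_isSelfAdjoint_mul_self_eq ha
  obtain ⟨δ, hδ, hδε, hδs⟩ : ∃ δ > 0, δ ≤ ε / 2 ∧ δ * (δ + 2 * ‖s‖) < ε / 2 :=
    exists_pos_le_apply_lt_of_continuous (by fun_prop) (by simp) (half_pos hε) (half_pos hε)
  obtain ⟨g, hgB, hg0, hg1, hgy, hcomm, hlift, hnorm⟩ :=
    hB.exists_finset_approx (insert s F) ha ha0 hyB hy hy0 hδ
  obtain ⟨c, hcB, hc⟩ := hlift s (Finset.mem_insert_self s F)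
  have hk : IsSelfAdjoint (1 - g) := .sub (.one A) (.of_nonneg hg0)
  have hks : ‖(1 - g) * s‖ ≤ ‖s‖ := (norm_mul_le _ _).trans
    (mul_le_of_le_one_left (norm_nonneg s) (norm_one_sub_le_one hg0 hg1))
  have hclose : ‖c * star c - (1 - g) * (s * s) * (1 - g)‖ < ε / 2 := calc
    _ = ‖c * star c - (1 - g) * s * star ((1 - g) * s)‖ := by
      rw [star_mul, hs.star_eq, hk.star_eq]
      simp only [mul_assoc]
    _ ≤ ‖c - (1 - g) * s‖ * (‖c - (1 - g) * s‖ + 2 * ‖(1 - g) * s‖) :=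
      norm_mul_star_self_sub_le _ _
    _ ≤ δ * (δ + 2 * ‖s‖) := by
      rw [norm_sub_rev] at hc
      gcongr
    _ < ε / 2 := hδs
  refine ⟨g, hgB, hg0, hg1, hgy, fun x hx => ?_, fun x hx => ?_, c * star c,
    mul_mem hcB (star_mem hcB), mul_star_self_nonneg c, hclose.trans (half_lt_self hε), ?_⟩
  · linarith [hcomm x (Finset.mem_insert_of_mem hx)]
  · obtain ⟨b, hbB, hb⟩ := hlift x (Finset.mem_insert_of_mem hx)
    exact ⟨b, hbB, by linarith⟩
  · linarith [norm_le_norm_add_norm_sub (c * star c) ((1 - g) * (s * s) * (1 - g))]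

theorem IsCentrallyLarge.exists_mem_cuntzSubeq (hB : IsCentrallyLarge B)
    (hBclosed : IsClosed (B : Set A)) (ha : 0 ≤ a) (ha0 : a ≠ 0) :
    ∃ y ∈ B, 0 ≤ y ∧ y ≠ 0 ∧ y ≾ a := by
  have : Nontrivial A := ⟨a, 0, ha0⟩
  have hε : 0 < ‖a‖ / 2 := half_pos (norm_pos_iff.mpr ha0)
  obtain ⟨g, -, hg0, -, -, -, -, w, hwB, hw0, hw, hwnorm⟩ :=
    hB.exists_finset_approx_nonneg ∅ ha ha0 (one_mem B) zero_le_one one_ne_zero hε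
  set ε := ‖a‖ / 2
  have hk : IsSelfAdjoint (1 - g) := .sub (.one A) (.of_nonneg hg0)
  set u := (1 - g) * a * (1 - g)
  have hu_sa : IsSelfAdjoint u := by
    simpa only [hk.star_eq] using ha.isSelfAdjoint.conjugate (1 - g)
  have hua : u ≾ a := by simpa only [hk.star_eq] using conj_cuntzSubeq (1 - g) a
  have hh_sa : IsSelfAdjoint (w - algebraMap ℝ A ε) :=
    hw0.isSelfAdjoint.sub (.algebraMap A (.all ε))
  have hhu : w - algebraMap ℝ A ε ≤ u :=
    sub_algebraMap_le_of_norm_sub_le (hu_sa.sub hw0.isSelfAdjoint) (norm_sub_rev w u ▸ hw.le)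
  have hhB : w - algebraMap ℝ A ε ∈ B := sub_mem hwB (algebraMap_mem B (ε : ℂ))
  refine ⟨(w - algebraMap ℝ A ε)⁺, posPart_mem_of_isClosed hBclosed hhB,
    CFC.posPart_nonneg _, fun h0 => ?_, (posPart_cuntzSubeq_of_le hh_sa hhu).trans hua⟩
  have hwε : ‖w‖ ≤ ε := (CStarAlgebra.norm_le_iff_le_algebraMap w hε.le hw0).mpr
    (sub_nonpos.mp ((CFC.posPart_eq_zero_iff _ hh_sa).mp h0))
  have hεε : ε + ε = ‖a‖ := add_halves ‖a‖
  linarith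

theorem IsCentrallyLarge.exists_pair_add_cuntzSubeq [IsSimpleRing A] (hB : IsCentrallyLarge B)
    (hBclosed : IsClosed (B : Set A)) (hinf : ¬ FiniteDimensional ℂ A) (ha : 0 ≤ a)
    (ha0 : a ≠ 0) :
    ∃ y₁ ∈ B, ∃ y₂ ∈ B, 0 ≤ y₁ ∧ y₁ ≠ 0 ∧ 0 ≤ y₂ ∧ y₂ ≠ 0 ∧
      ∀ g h : A, g ≾ y₁ → h ≾ y₂ → g + h ≾ a := by
  obtain ⟨a₁, a₂, ha₁, ha₁0, ha₂, ha₂0, horth, hsum⟩ := exists_orthogonal_cuntzSubeq hinf ha ha0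
  obtain ⟨y₁, hy₁B, hy₁, hy₁0, hya₁⟩ := hB.exists_mem_cuntzSubeq hBclosed ha₁ ha₁0
  obtain ⟨y₂, hy₂B, hy₂, hy₂0, hya₂⟩ := hB.exists_mem_cuntzSubeq hBclosed ha₂ ha₂0
  exact ⟨y₁, hy₁B, y₂, hy₂B, hy₁, hy₁0, hy₂, hy₂0, fun g h hg hh =>
    ((hg.trans hya₁).add_of_mul_eq_zero (hh.trans hya₂) ha₁ ha₂ horth).trans hsum⟩

end CentrallyLarge

section TracialRankZero

variable {A : Type*} [CStarAlgebra A]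

theorem IsProjection.isStarProjection {p : A} (hp : IsProjection p) : IsStarProjection p :=
  ⟨hp.2.symm, hp.1.symm⟩

variable {p v w : A}

theorem norm_conj_mul_mul_le (hp : IsStarProjection p) (hv : IsSelfAdjoint v) :
    ‖p * (v * w * v) * p‖
      ≤ (‖p * w * p‖ * ‖p * v‖ + 2 * ‖w‖ * ‖p * v - v * p‖) * ‖p * v‖ := by
  have hpp : p * p = p := hp.isIdempotentElem.eq
  have hpn : ‖p‖ ≤ 1 := hp.norm_le
  have hvp : ‖v * p‖ = ‖p * v‖ := by
    rw [← norm_star, star_mul, hp.isSelfAdjoint.star_eq, hv.star_eq]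
  set c := p * v - v * p with hc
  have hsplit : p * (v * w * v) * p
      = p * v * (p * w * p) * (v * p) + (p * c * w * (v * p) - p * v * p * w * (c * p)) := by
    have hpc : p * c = p * v - p * v * p := by rw [hc, mul_sub, ← mul_assoc, hpp, mul_assoc]
    have hcp : c * p = p * v * p - v * p := by rw [hc, sub_mul, mul_assoc v, hpp]
    rw [hpc, hcp]
    noncomm_ring
  have hpcwvp : ‖p * c * w * (v * p)‖ ≤ 1 * ‖c‖ * ‖w‖ * ‖p * v‖ :=
    norm_mul_le_of_le (norm_mul_le_of_le (norm_mul_le_of_le hpn le_rfl) le_rfl) hvp.le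
  have hpvpwcp : ‖p * v * p * w * (c * p)‖ ≤ ‖p * v‖ * 1 * ‖w‖ * (‖c‖ * 1) :=
    norm_mul_le_of_le (norm_mul_le_of_le (norm_mul_le_of_le le_rfl hpn) le_rfl)
      (norm_mul_le_of_le le_rfl hpn)
  calc ‖p * (v * w * v) * p‖
      ≤ ‖p * v‖ * ‖p * w * p‖ * ‖p * v‖
        + (1 * ‖c‖ * ‖w‖ * ‖p * v‖ + ‖p * v‖ * 1 * ‖w‖ * (‖c‖ * 1)) := by
        rw [hsplit]
        exact norm_add_le_of_le (norm_mul₃_le.trans_eq (by rw [hvp]))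
          (norm_sub_le_of_le hpcwvp hpvpwcp)
    _ = (‖p * w * p‖ * ‖p * v‖ + 2 * ‖w‖ * ‖c‖) * ‖p * v‖ := by ring

theorem norm_mul_star_self_conj_le {r : A} (hp : IsStarProjection p) :
    ‖p * (r * (v * star v) * star r) * p‖ ≤ (‖r‖ * ‖p * v‖ + ‖p * r - r * p‖ * ‖v‖) ^ 2 := by
  have hprv : ‖p * r * v‖ ≤ ‖r‖ * ‖p * v‖ + ‖p * r - r * p‖ * ‖v‖ := by
    have hsplit : p * r * v = r * (p * v) + (p * r - r * p) * v := by noncomm_ring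
    rw [hsplit]
    exact norm_add_le_of_le (norm_mul_le _ _) (norm_mul_le _ _)
  have hsq : p * (r * (v * star v) * star r) * p = p * r * v * star (p * r * v) := by
    simp only [star_mul, hp.isSelfAdjoint.star_eq, mul_assoc]
  rw [hsq, CStarRing.norm_self_mul_star, ← sq]
  gcongr

variable [PartialOrder A] [StarOrderedRing A] {B : StarSubalgebra ℂ A} {y : A}

theorem exists_mem_smul_mul_self_le [Nontrivial A] (hB : IsClosed (B : Set A)) (hwB : w ∈ B)
    (hw : 0 ≤ w) {lam : ℝ} (hlam : lam < ‖w‖) :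
    ∃ v ∈ B, IsSelfAdjoint v ∧ v ≠ 0 ∧ lam • (v * v) ≤ v * w * v := by
  set h := w - algebraMap ℝ A lam with hh
  have hh_sa : IsSelfAdjoint h := hw.isSelfAdjoint.sub (.algebraMap A (.all lam))
  have hhB : h ∈ B := sub_mem hwB (algebraMap_mem B (lam : ℂ))
  have hv : 0 ≤ h⁺ := CFC.posPart_nonneg h
  refine ⟨h⁺, posPart_mem_of_isClosed hB hhB, hv.isSelfAdjoint, fun h0 => ?_, ?_⟩
  · have hle : w ≤ algebraMap ℝ A lam := sub_nonpos.mp ((CFC.posPart_eq_zero_iff h).mp h0)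
    exact hlam.not_ge ((le_algebraMap_iff_spectrum_le (ha := hw.isSelfAdjoint)).mp hle ‖w‖
      (CStarAlgebra.norm_mem_spectrum_of_nonneg hw))
  · have hcube : h⁺ * w * h⁺ - lam • (h⁺ * h⁺) = h⁺ * h⁺ * h⁺ := calc
      _ = h⁺ * h * h⁺ := by
        rw [hh, Algebra.algebraMap_eq_smul_one, mul_sub, sub_mul, mul_smul_comm, mul_one,
          smul_mul_assoc]
      _ = h⁺ * (h⁺ - h⁻) * h⁺ := by rw [CFC.posPart_sub_negPart h]
      _ = h⁺ * h⁺ * h⁺ := by rw [mul_sub, CFC.posPart_mul_negPart, sub_zero]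
    rw [← sub_nonneg, hcube]
    exact hv.isSelfAdjoint.conjugate_nonneg hv

theorem le_norm_conj_of_smul_mul_self_le (hp : IsStarProjection p) (hv : IsSelfAdjoint v)
    {lam : ℝ} (h : lam • (v * v) ≤ v * w * v) :
    lam * ‖p * v‖ ≤ ‖p * w * p‖ * ‖p * v‖ + 2 * ‖w‖ * ‖p * v - v * p‖ := by
  have hps : star p = p := hp.isSelfAdjoint.star_eq
  rcases le_or_gt lam 0 with hlam | hlam
  · exact (mul_nonpos_of_nonpos_of_nonneg hlam (norm_nonneg _)).trans (by positivity)
  rcases (norm_nonneg (p * v)).eq_or_lt with hpv | hpv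
  · rw [← hpv, mul_zero]
    positivity
  refine le_of_mul_le_mul_right ?_ hpv
  have hnorm : ‖p * (v * v) * p‖ = ‖p * v‖ * ‖p * v‖ := by
    rw [← CStarRing.norm_self_mul_star, star_mul, hps, hv.star_eq]
    simp only [mul_assoc]
  have hconj : lam • (p * (v * v) * p) ≤ p * (v * w * v) * p := by
    simpa only [hps, mul_smul_comm, smul_mul_assoc] using star_left_conjugate_le_conjugate h p
  have hconj0 : 0 ≤ p * (v * v) * p := hp.isSelfAdjoint.conjugate_nonneg hv.mul_self_nonneg
  calc lam * ‖p * v‖ * ‖p * v‖ = ‖lam • (p * (v * v) * p)‖ := by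
        rw [norm_smul, Real.norm_of_nonneg hlam.le, hnorm, mul_assoc]
    _ ≤ ‖p * (v * w * v) * p‖ :=
      CStarAlgebra.norm_le_norm_of_nonneg_of_le (smul_nonneg hlam.le hconj0) hconj
    _ ≤ (‖p * w * p‖ * ‖p * v‖ + 2 * ‖w‖ * ‖p * v - v * p‖) * ‖p * v‖ :=
      norm_conj_mul_mul_le hp hv

-- `TR(B) = 0` says nothing about `‖p * w * p‖`. A nonzero projection `p` that almost commutes with
-- the `r i` compresses `1 ≤ ∑ i, r i * (v * star v) * star (r i)` to a sum of norm at least one,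
-- which keeps `‖p * v‖` away from zero by a constant independent of `p`.
theorem exists_pos_le_norm_projection_mul {n : ℕ} {r : Fin n → A}
    (hr : 1 ≤ ∑ i, r i * (v * star v) * star (r i)) :
    ∃ κ > 0, ∀ p : A, IsStarProjection p → p ≠ 0 → (∀ i, ‖p * r i - r i * p‖ ≤ κ) →
      κ ≤ ‖p * v‖ := by
  obtain ⟨κ, hκ, -, hsum⟩ : ∃ κ > 0, κ ≤ 1 ∧ ∑ i, (‖r i‖ * κ + κ * ‖v‖) ^ 2 < 1 :=
    exists_pos_le_apply_lt_of_continuous (by fun_prop) (by simp) one_pos one_pos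
  refine ⟨κ, hκ, fun p hp hp0 hcomm => ?_⟩
  by_contra! hpv
  refine hsum.not_ge ?_
  have hps : star p = p := hp.isSelfAdjoint.star_eq
  have hconj : p ≤ ∑ i, p * (r i * (v * star v) * star (r i)) * p := by
    simpa only [hps, mul_one, hp.isIdempotentElem.eq, Finset.mul_sum, Finset.sum_mul] using
      star_left_conjugate_le_conjugate hr p
  have hp1 : 1 * ‖p‖ ≤ ‖p‖ * ‖p‖ := by
    simpa only [one_mul, hp.isIdempotentElem.eq] using norm_mul_le p p
  calc 1 ≤ ‖p‖ := le_of_mul_le_mul_right hp1 (norm_pos_iff.mpr hp0)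
    _ ≤ ‖∑ i, p * (r i * (v * star v) * star (r i)) * p‖ :=
      CStarAlgebra.norm_le_norm_of_nonneg_of_le hp.nonneg hconj
    _ ≤ ∑ i, (‖r i‖ * ‖p * v‖ + ‖p * r i - r i * p‖ * ‖v‖) ^ 2 :=
      norm_sum_le_of_le _ fun i _ => norm_mul_star_self_conj_le hp
    _ ≤ ∑ i, (‖r i‖ * κ + κ * ‖v‖) ^ 2 := by
      gcongr with i
      exact hcomm i

theorem TracialTopRankZeroIn.exists_norm_sub_le_norm_conj [IsSimpleRing A]
    (hTR : TracialTopRankZeroIn B) (hB : IsCentrallyLarge B) (hBclosed : IsClosed (B : Set A))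
    {G : Finset A} (hG : (G : Set A) ⊆ B) (hwB : w ∈ B) (hw : 0 ≤ w) (hyB : y ∈ B) (hy : 0 ≤ y)
    (hy0 : y ≠ 0) {ε : ℝ} (hε : 0 < ε) :
    ∃ p : A, IsProjection p ∧ ∃ E : NonUnitalStarSubalgebra ℂ A, FiniteDimensional ℂ E ∧ p ∈ E ∧
      (∀ z ∈ E, p * z = z ∧ z * p = z) ∧ (∀ x ∈ G, ‖p * x - x * p‖ < ε) ∧
      (∀ x ∈ G, ∃ d ∈ E, ‖p * x * p - d‖ < ε) ∧ 1 - p ≾ y ∧ ‖w‖ - ε ≤ ‖p * w * p‖ := by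
  classical
  obtain ⟨v, hvB, hv, hv0, hvw⟩ :=
    exists_mem_smul_mul_self_le hBclosed hwB hw (sub_lt_self ‖w‖ (half_pos hε))
  obtain ⟨n, r, hrB, hr⟩ := hB.exists_one_le_sum_conj (mul_mem hvB (star_mem hvB))
    (mul_star_self_nonneg v) ((CStarRing.mul_star_self_eq_zero_iff v).not.mpr hv0)
  obtain ⟨κ, hκ, hpv⟩ := exists_pos_le_norm_projection_mul hr
  obtain ⟨δ, hδ, hδεκ, hδw⟩ : ∃ δ > 0, δ ≤ min ε κ ∧ 2 * ‖w‖ * δ < ε / 2 * κ :=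
    exists_pos_le_apply_lt_of_continuous (by fun_prop) (by simp) (lt_min hε hκ) (by positivity)
  obtain ⟨hδε, hδκ⟩ := le_min_iff.mp hδεκ
  have hG' : (↑(insert v (G ∪ Finset.univ.image r)) : Set A) ⊆ B := by
    simp only [Finset.coe_insert, Finset.coe_union, Finset.coe_image, Finset.coe_univ,
      Set.image_univ]
    exact Set.insert_subset hvB (Set.union_subset hG (Set.range_subset_iff.mpr hrB))
  obtain ⟨p, -, hp, hp0, E, -, hE, hpE, hunit, hcomm, happrox, h1p⟩ :=
    hTR δ hδ _ hG' y hyB hy hy0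
  refine ⟨p, hp, E, hE, hpE, hunit, fun x hx => (hcomm x (by simp [hx])).trans_le hδε,
    fun x hx => ?_, h1p.cuntzSubeq, ?_⟩
  · obtain ⟨d, hdE, hd⟩ := happrox x (by simp [hx])
    exact ⟨d, hdE, hd.trans_le hδε⟩
  · have hκpv : κ ≤ ‖p * v‖ := hpv p hp.isStarProjection hp0 fun i =>
      (hcomm (r i) (by simp)).le.trans hδκ
    have hmul : (‖w‖ - ε / 2) * ‖p * v‖ ≤ (‖p * w * p‖ + ε / 2) * ‖p * v‖ := calc
      _ ≤ ‖p * w * p‖ * ‖p * v‖ + 2 * ‖w‖ * ‖p * v - v * p‖ :=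
        le_norm_conj_of_smul_mul_self_le hp.isStarProjection hv hvw
      _ ≤ ‖p * w * p‖ * ‖p * v‖ + 2 * ‖w‖ * δ := by
        gcongr
        exact (hcomm v (by simp)).le
      _ ≤ (‖p * w * p‖ + ε / 2) * ‖p * v‖ := by
        rw [add_mul]
        exact add_le_add_right (hδw.le.trans (by gcongr)) _
    linarith [le_of_mul_le_mul_right hmul (hκ.trans_le hκpv)]

end TracialRankZero

section Compression

variable {A : Type*} [CStarAlgebra A]

section Estimates

variable {p g k q a b d w x : A} {δ η : ℝ}

theorem norm_sub_sub_mul_one_sub_le (hp : IsStarProjection p) (hk : ‖p * k - k * p‖ ≤ δ)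
    (hg : ‖g - p * k * p‖ ≤ η) : ‖p - g - p * (1 - k)‖ ≤ η + δ := by
  have hsplit : p - g - p * (1 - k) = p * (p * k - k * p) - (g - p * k * p) := by
    rw [mul_sub p (p * k), ← mul_assoc p p, hp.isIdempotentElem.eq]
    noncomm_ring
  rw [hsplit, add_comm]
  refine norm_sub_le_of_le ?_ hg
  simpa only [one_mul] using norm_mul_le_of_le hp.norm_le hk

theorem norm_mul_sub_le_of_norm_sub_mul_le (hp : IsStarProjection p) (hq : ‖q - p * k‖ ≤ η)
    (hkx : ‖k * x - b‖ ≤ δ) (hpb : ‖p * b - b * p‖ ≤ δ) (hd : ‖p * b * p - d‖ ≤ δ) :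
    ‖q * x - d‖ ≤ η * ‖x‖ + 3 * δ := by
  have hsplit : q * x - d
      = (q - p * k) * x + p * (k * x - b) + p * (p * b - b * p) + (p * b * p - d) := by
    rw [mul_sub p (p * b), ← mul_assoc p p, hp.isIdempotentElem.eq]
    noncomm_ring
  calc ‖q * x - d‖ ≤ η * ‖x‖ + 1 * δ + 1 * δ + δ := by
        rw [hsplit]
        exact norm_add_le_of_le (norm_add_le_of_le (norm_add_le_of_le
          (norm_mul_le_of_le hq le_rfl) (norm_mul_le_of_le hp.norm_le hkx))
          (norm_mul_le_of_le hp.norm_le hpb)) hd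
    _ = η * ‖x‖ + 3 * δ := by ring

theorem norm_mul_sub_le_of_norm_sub_mul_le' (hp : IsStarProjection p) (hq : ‖q - k * p‖ ≤ η)
    (hxk : ‖x * k - k * x‖ ≤ δ) (hkx : ‖k * x - b‖ ≤ δ) (hpb : ‖p * b - b * p‖ ≤ δ)
    (hd : ‖p * b * p - d‖ ≤ δ) : ‖x * q - d‖ ≤ η * ‖x‖ + 4 * δ := by
  have hsplit : x * q - d = x * (q - k * p) + (x * k - k * x) * p + (k * x - b) * p
      - (p * b - b * p) * p + (p * b * p - d) := by
    rw [sub_mul (p * b), mul_assoc b, hp.isIdempotentElem.eq]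
    noncomm_ring
  calc ‖x * q - d‖ ≤ ‖x‖ * η + δ * 1 + δ * 1 + δ * 1 + δ := by
        rw [hsplit]
        exact norm_add_le_of_le (norm_sub_le_of_le (norm_add_le_of_le (norm_add_le_of_le
          (norm_mul_le_of_le le_rfl hq) (norm_mul_le_of_le hxk hp.norm_le))
          (norm_mul_le_of_le hkx hp.norm_le)) (norm_mul_le_of_le hpb hp.norm_le)) hd
    _ = η * ‖x‖ + 4 * δ := by ring

theorem norm_conj_sub_conj_le (hp : IsStarProjection p) (hq1 : ‖q‖ ≤ 1) (hk1 : ‖k‖ ≤ 1)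
    (hpk : ‖q - p * k‖ ≤ η) (hkp : ‖q - k * p‖ ≤ η) (hw : ‖w - k * a * k‖ ≤ δ) :
    ‖p * w * p - q * a * q‖ ≤ 2 * η * ‖a‖ + δ := by
  have hsplit : p * w * p - q * a * q
      = p * (w - k * a * k) * p - (q - p * k) * a * q - p * k * a * (q - k * p) := by
    noncomm_ring
  calc ‖p * w * p - q * a * q‖ ≤ 1 * δ * 1 + η * ‖a‖ * 1 + 1 * 1 * ‖a‖ * η := by
        rw [hsplit]
        exact norm_sub_le_of_le (norm_sub_le_of_le
          (norm_mul_le_of_le (norm_mul_le_of_le hp.norm_le hw) hp.norm_le)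
          (norm_mul_le_of_le (norm_mul_le_of_le hpk le_rfl) hq1))
          (norm_mul_le_of_le (norm_mul_le_of_le (norm_mul_le_of_le hp.norm_le hk1) le_rfl) hkp)
    _ = 2 * η * ‖a‖ + δ := by ring

end Estimates

theorem exists_mem_isSelfAdjoint_norm_sub_le {E : NonUnitalStarSubalgebra ℂ A} {x d : A}
    (hx : IsSelfAdjoint x) (hdE : d ∈ E) {δ : ℝ} (hd : ‖x - d‖ ≤ δ) :
    ∃ h ∈ E, IsSelfAdjoint h ∧ ‖x - h‖ ≤ δ := by
  refine ⟨realPart d, ?_, (realPart d).2, ?_⟩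
  · rw [realPart_apply_coe, ← Complex.coe_smul]
    exact E.smul_mem _ (add_mem hdE (star_mem hdE) : d + star d ∈ E)
  · have hreal : x - realPart d = realPart (x - d) := by
      rw [map_sub, AddSubgroupClass.coe_sub, hx.coe_realPart]
    rw [hreal]
    exact (realPart.norm_le _).trans hd

variable [PartialOrder A] [StarOrderedRing A]

theorem posPart_le_algebraMap {x : A} (hx : IsSelfAdjoint x) {r : ℝ} (hr : 0 ≤ r)
    (hxr : x ≤ algebraMap ℝ A r) : x⁺ ≤ algebraMap ℝ A r := by
  rw [CFC.posPart_def, cfcₙ_eq_cfc]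
  exact cfc_le_algebraMap _ _ _ fun t ht =>
    sup_le ((le_algebraMap_iff_spectrum_le (ha := hx)).mp hxr t ht) hr

theorem le_smul_of_conj_eq {p x : A} (hp : IsStarProjection p) (hx : IsSelfAdjoint x)
    (hpx : p * x * p = x) {δ : ℝ} (hδ : ‖x‖ ≤ δ) : x ≤ δ • p := by
  have hconj := star_left_conjugate_le_conjugate
    (hx.le_algebraMap_norm_self.trans (algebraMap_mono A hδ)) p
  simpa only [hp.isSelfAdjoint.star_eq, hpx, Algebra.algebraMap_eq_smul_one, mul_smul_comm,
    mul_one, smul_mul_assoc, hp.isIdempotentElem.eq] using hconj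

theorem norm_posPart_sub_le {f x : A} (hf : IsSelfAdjoint f) (hx : 0 ≤ x) {δ : ℝ}
    (hδ : ‖f - x‖ ≤ δ) : ‖f⁺ - x‖ ≤ 2 * δ := by
  have hδ0 : 0 ≤ δ := (norm_nonneg _).trans hδ
  have hneg : ‖f⁻‖ ≤ δ := by
    rw [CStarAlgebra.norm_le_iff_le_algebraMap _ hδ0 (CFC.negPart_nonneg f), ← CFC.posPart_neg]
    refine posPart_le_algebraMap hf.neg hδ0 ?_
    have hxf := (hx.isSelfAdjoint.sub hf).le_algebraMap_norm_self
    rw [norm_sub_rev] at hxf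
    calc -f ≤ x - f := by simpa only [zero_sub] using sub_le_sub_right hx f
      _ ≤ algebraMap ℝ A δ := hxf.trans (algebraMap_mono A hδ)
  have hsplit : f⁺ - x = f⁻ + (f - x) := by
    nth_rw 3 [← CFC.posPart_sub_negPart f hf]
    abel
  rw [hsplit, two_mul]
  exact norm_add_le_of_le hneg hδ

variable {E : NonUnitalStarSubalgebra ℂ A} {p d x : A} {δ : ℝ}

-- Replacing an approximant `h` by `h - δ • p` puts it below `x`, so that its positive part is Cuntz
-- subequivalent to `x`.
theorem exists_mem_le_norm_sub_le (hp : IsStarProjection p) (hpE : p ∈ E)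
    (hunit : ∀ z ∈ E, p * z = z ∧ z * p = z) (hx : IsSelfAdjoint x) (hpx : p * x * p = x)
    (hdE : d ∈ E) (hd : ‖x - d‖ ≤ δ) :
    ∃ f ∈ E, IsSelfAdjoint f ∧ f ≤ x ∧ ‖f - x‖ ≤ 2 * δ := by
  obtain ⟨h, hhE, hh, hhx⟩ := exists_mem_isSelfAdjoint_norm_sub_le hx hdE hd
  rw [norm_sub_rev] at hhx
  have hδ0 : 0 ≤ δ := (norm_nonneg _).trans hhx
  have hphp : p * h * p = h := by rw [(hunit h hhE).1, (hunit h hhE).2]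
  have hle : h - x ≤ δ • p := by
    refine le_smul_of_conj_eq hp (hh.sub hx) ?_ hhx
    rw [mul_sub, sub_mul, hphp, hpx]
  have hδp : ‖δ • p‖ ≤ δ * 1 := by
    rw [norm_smul, Real.norm_of_nonneg hδ0]
    exact mul_le_mul_of_nonneg_left hp.norm_le hδ0
  refine ⟨h - δ • p, E.sub_mem hhE ?_, hh.sub (.smul (.all δ) hp.isSelfAdjoint),
    sub_le_comm.mp hle, ?_⟩
  · simpa only [Complex.coe_smul] using E.smul_mem (δ : ℂ) hpE
  · calc ‖h - δ • p - x‖ = ‖h - x - δ • p‖ := by rw [sub_right_comm]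
      _ ≤ δ + δ * 1 := norm_sub_le_of_le hhx hδp
      _ = 2 * δ := by ring

theorem exists_mem_cuntzSubeq_norm_sub_le (hE : IsClosed (E : Set A)) (hp : IsStarProjection p)
    (hpE : p ∈ E) (hunit : ∀ z ∈ E, p * z = z ∧ z * p = z) {k : A} (hk0 : 0 ≤ k) (hk1 : k ≤ 1)
    (hdE : d ∈ E) (hd : ‖p * k * p - d‖ ≤ δ) :
    ∃ g ∈ E, 0 ≤ g ∧ g ≤ 1 ∧ g ≾ k ∧ ‖g - p * k * p‖ ≤ 4 * δ := by
  have hps : star p = p := hp.isSelfAdjoint.star_eq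
  have hpp : p * p = p := hp.isIdempotentElem.eq
  have hx0 : 0 ≤ p * k * p := hp.isSelfAdjoint.conjugate_nonneg hk0
  have hxk : p * k * p ≾ k := by simpa only [hps] using conj_cuntzSubeq p k
  have hxp : p * k * p ≤ p := by
    simpa only [hps, mul_one, hpp] using star_left_conjugate_le_conjugate hk1 p
  have hpx : p * (p * k * p) * p = p * k * p := by
    rw [← mul_assoc, ← mul_assoc, hpp, mul_assoc (p * k), hpp]
  obtain ⟨f, hfE, hf, hfx, hfδ⟩ :=
    exists_mem_le_norm_sub_le hp hpE hunit hx0.isSelfAdjoint hpx hdE hd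
  refine ⟨f⁺, posPart_mem_of_isClosed hE hfE, CFC.posPart_nonneg f, ?_,
    (posPart_cuntzSubeq_of_le hf hfx).trans hxk, ?_⟩
  · rw [← map_one (algebraMap ℝ A)]
    exact posPart_le_algebraMap hf zero_le_one
      ((hfx.trans (hxp.trans hp.le_one)).trans_eq (map_one _).symm)
  · linarith [norm_posPart_sub_le hf hx0 hfδ]

theorem exists_mem_cuntzSubeq_norm_sub_sub_mul_le (hE : IsClosed (E : Set A))
    (hp : IsStarProjection p) (hpE : p ∈ E) (hunit : ∀ z ∈ E, p * z = z ∧ z * p = z) {k : A}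
    (hk0 : 0 ≤ k) (hk1 : k ≤ 1) (hpk : ‖p * k - k * p‖ ≤ δ) (hdE : d ∈ E)
    (hd : ‖p * k * p - d‖ ≤ δ) :
    ∃ g ∈ E, 0 ≤ g ∧ g ≤ 1 ∧ g ≾ k ∧ ‖p - g‖ ≤ 1 ∧
      ‖p - g - p * (1 - k)‖ ≤ 5 * δ ∧ ‖p - g - (1 - k) * p‖ ≤ 5 * δ := by
  obtain ⟨g, hgE, hg0, hg1, hgk, hg⟩ :=
    exists_mem_cuntzSubeq_norm_sub_le hE hp hpE hunit hk0 hk1 hdE hd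
  have hright : ‖p - g - p * (1 - k)‖ ≤ 5 * δ :=
    (norm_sub_sub_mul_one_sub_le hp hpk hg).trans_eq (by ring)
  refine ⟨g, hgE, hg0, hg1, hgk, ?_, hright, ?_⟩
  · calc ‖p - g‖ = ‖p * (1 - g)‖ := by rw [mul_sub, mul_one, (hunit g hgE).1]
      _ ≤ 1 * 1 := norm_mul_le_of_le hp.norm_le (norm_one_sub_le_one hg0 hg1)
      _ = 1 := one_mul 1
  · rw [← norm_star]
    simpa only [star_sub, star_mul, star_one, hp.isSelfAdjoint.star_eq, hg0.isSelfAdjoint.star_eq,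
      hk0.isSelfAdjoint.star_eq] using hright

theorem exists_mem_forall_norm_mul_sub_lt (hE : IsClosed (E : Set A)) (hp : IsStarProjection p)
    (hpE : p ∈ E) (hunit : ∀ z ∈ E, p * z = z ∧ z * p = z) {F : Set A} {b : A → A} {k a w : A}
    {ε : ℝ} (hε : ∀ x ∈ F, (10 * ‖x‖ + 7) * δ < ε) (hk0 : 0 ≤ k) (hk1 : k ≤ 1)
    (hkF : ∀ x ∈ F, ‖k * x - x * k‖ < δ) (hb : ∀ x ∈ F, ‖(1 - k) * x - b x‖ < δ)
    (hw : ‖w - (1 - k) * a * (1 - k)‖ < δ)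
    (hcomm : ∀ x ∈ insert k (b '' F), ‖p * x - x * p‖ < δ)
    (happrox : ∀ x ∈ insert k (b '' F), ∃ d ∈ E, ‖p * x * p - d‖ < δ) :
    ∃ g ∈ E, 0 ≤ g ∧ g ≤ 1 ∧ g ≾ k ∧
      (∀ x ∈ F, (∃ d ∈ E, ‖(p - g) * x - d‖ < ε) ∧ ∃ d ∈ E, ‖x * (p - g) - d‖ < ε) ∧
      (∀ x ∈ F, ‖(p - g) * x - x * (p - g)‖ < ε) ∧
      ‖p * w * p‖ ≤ ‖(p - g) * a * (p - g)‖ + (10 * ‖a‖ + 1) * δ := by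
  have hδ : 0 < δ := (norm_nonneg _).trans_lt hw
  have hkmem : k ∈ insert k (b '' F) := Set.mem_insert k _
  obtain ⟨e, heE, he⟩ := happrox k hkmem
  obtain ⟨g, hgE, hg0, hg1, hgk, hq1, hqr, hql⟩ := exists_mem_cuntzSubeq_norm_sub_sub_mul_le
    hE hp hpE hunit hk0 hk1 (hcomm k hkmem).le heE he.le
  have hest (x : A) (hx : x ∈ F) : ∃ d ∈ E, ‖(p - g) * x - d‖ ≤ 5 * δ * ‖x‖ + 3 * δ ∧
      ‖x * (p - g) - d‖ ≤ 5 * δ * ‖x‖ + 4 * δ := by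
    have hbmem : b x ∈ insert k (b '' F) := Set.mem_insert_of_mem k ⟨x, hx, rfl⟩
    obtain ⟨d, hdE, hd⟩ := happrox (b x) hbmem
    have hxk : x * (1 - k) - (1 - k) * x = k * x - x * k := by noncomm_ring
    exact ⟨d, hdE,
      norm_mul_sub_le_of_norm_sub_mul_le hp hqr (hb x hx).le (hcomm _ hbmem).le hd.le,
      norm_mul_sub_le_of_norm_sub_mul_le' hp hql (hxk ▸ (hkF x hx).le) (hb x hx).le
        (hcomm _ hbmem).le hd.le⟩
  refine ⟨g, hgE, hg0, hg1, hgk, fun x hx => ?_, fun x hx => ?_, ?_⟩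
  · obtain ⟨d, hdE, hleft, hright⟩ := hest x hx
    have hδx : 0 ≤ δ * ‖x‖ := by positivity
    exact ⟨⟨d, hdE, by linarith [hε x hx]⟩, d, hdE, by linarith [hε x hx]⟩
  · obtain ⟨d, -, hleft, hright⟩ := hest x hx
    have htriangle := norm_sub_le_norm_sub_add_norm_sub ((p - g) * x) d (x * (p - g))
    rw [norm_sub_rev d] at htriangle
    linarith [hε x hx]
  · have hdist := norm_conj_sub_conj_le hp hq1 (norm_one_sub_le_one hk0 hk1) hqr hql hw.le
    linarith [norm_le_norm_add_norm_sub' (p * w * p) ((p - g) * a * (p - g))]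

end Compression

/-- **Theorem 3.1.** Let `A` be an infinite-dimensional unital simple
C*-algebra and let `B ⊆ A` be a centrally large subalgebra with tracial
topological rank zero.  Then `A` belongs to `WTA 𝔽`, where `𝔽` is the class of
finite-dimensional C*-algebras. -/
theorem wta_of_centrallyLarge_trZero
    {A : Type*} [CStarAlgebra A] [PartialOrder A] [StarOrderedRing A]
    (hsimple : IsSimpleCStarAlgebra A)
    (hinfdim : ¬ FiniteDimensional ℂ A)
    (B : StarSubalgebra ℂ A) (hBclosed : IsClosed (B : Set A))
    (hlarge : IsCentrallyLarge B)
    (hTR : TracialTopRankZeroIn B) :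
    ∀ (ε : ℝ), 0 < ε → ∀ F : Finset A, ∀ a : A, 0 ≤ a → a ≠ 0 →
    ∃ p g : A, ∃ D : NonUnitalStarSubalgebra ℂ A,
      FiniteDimensional ℂ D ∧ IsProjection p ∧ p ∈ D ∧ g ∈ D ∧
      0 ≤ g ∧ g ≤ 1 ∧ (∀ z ∈ D, p * z = z ∧ z * p = z) ∧
      (∀ x ∈ F, (∃ d ∈ D, ‖(p - g) * x - d‖ < ε) ∧
                (∃ d ∈ D, ‖x * (p - g) - d‖ < ε)) ∧
      (∀ x ∈ F, ‖(p - g) * x - x * (p - g)‖ < ε) ∧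
      CuntzSubeq (1 - (p - g)) a ∧
      ‖(p - g) * a * (p - g)‖ ≥ ‖a‖ - ε := by
  classical
  intro ε hε F a ha ha0
  have : Nontrivial A := ⟨a, 0, ha0⟩
  have : IsSimpleRing A := hsimple.isSimpleRing
  obtain ⟨y₁, hy₁B, y₂, hy₂B, hy₁, hy₁0, hy₂, hy₂0, hadd⟩ :=
    hlarge.exists_pair_add_cuntzSubeq hBclosed hinfdim ha ha0
  obtain ⟨δ, hδ, hsmall⟩ :=
    exists_pos_forall_mul_lt (insert a F) (fun x => 10 * ‖x‖ + 7) hε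
  obtain ⟨k, hkB, hk0, hk1, hky, hkF, hlift, w, hwB, hw0, hwa, hwnorm⟩ :=
    hlarge.exists_finset_approx_nonneg F ha ha0 hy₁B hy₁ hy₁0 hδ
  choose! b hbB hb using hlift
  have hG : (↑(insert k (F.image b)) : Set A) ⊆ B := by
    simpa [Set.insert_subset_iff, hkB, Set.subset_def] using hbB
  obtain ⟨p, hp, E, hE, hpE, hunit, hcomm, happrox, h1p, hpw⟩ :=
    hTR.exists_norm_sub_le_norm_conj hlarge hBclosed hG hwB hw0 hy₂B hy₂ hy₂0 hδ
  obtain ⟨g, hgE, hg0, hg1, hgk, hest, hqF, hqa⟩ :=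
    exists_mem_forall_norm_mul_sub_lt (F := F) E.toSubmodule.closed_of_finiteDimensional
      hp.isStarProjection hpE hunit (fun x hx => hsmall x (Finset.mem_insert_of_mem hx))
      hk0 hk1 hkF hb hwa (by simpa using hcomm) (by simpa using happrox)
  have hcuntz : 1 - (p - g) ≾ a := by
    simpa only [← sub_add, add_comm] using hadd g (1 - p) (hgk.trans hky) h1p
  exact ⟨p, g, E, hE, hp, hpE, hgE, hg0, hg1, hunit, hest, hqF, hcuntz,
    by linarith [hsmall a (Finset.mem_insert_self a F)]⟩
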